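/- Under the stated setup and assumptions, the canonical angles ν_1 ≤ … ≤ ν_k between the column spaces of V_k and V̂ satisfy sin ν_j ≤ γ_j^{2q+2}·‖Ω_2Ω_1†‖₂ / √(1 + γ_j^{4q+4}·‖Ω_2Ω_1†‖₂²) for every j = 1,…,k. -/

import Mathlib

open scoped ENNReal
open Matrix

/-- The `j`-th largest singular value (0-indexed) of a complex matrix,
obtained as the decreasingly sorted square roots of the eigenvalues of `Mᴴ * M`. -/
noncomputable def sval {m n : ℕ} (M : Matrix (Fin m) (Fin n) ℂ) (j : ℕ) : ℝ :=
  (List.insertionSort (· ≥ ·)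
    ((List.ofFn (Matrix.isHermitian_conjTranspose_mul_self M).eigenvalues).map Real.sqrt)).getD j 0

/-- The Schatten-`p` norm (`p = ∞` gives the spectral norm). -/
noncomputable def schatten {m n : ℕ} (p : ℝ≥0∞) (M : Matrix (Fin m) (Fin n) ℂ) : ℝ :=
  if p = ⊤ then sval M 0
  else (∑ j ∈ Finset.range n, sval M j ^ p.toReal) ^ (1 / p.toReal)

/-- Moore–Penrose pseudoinverse of a full-row-rank matrix. -/
noncomputable def rpinv {a b : ℕ} (M : Matrix (Fin a) (Fin b) ℂ) : Matrix (Fin b) (Fin a) ℂ :=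
  Mᴴ * (M * Mᴴ)⁻¹

/-- Rectangular diagonal matrix with entries `σ (off), σ (off+1), …` on the diagonal. -/
noncomputable def diagRect (σ : ℕ → ℝ) (off a b : ℕ) : Matrix (Fin a) (Fin b) ℂ :=
  Matrix.of fun i j => if (i : ℕ) = (j : ℕ) then (σ (off + (i : ℕ)) : ℂ) else 0

/-- The first `b` columns of a matrix with `b + c` columns. -/
def colsL {a b c : ℕ} (M : Matrix (Fin a) (Fin (b + c)) ℂ) : Matrix (Fin a) (Fin b) ℂ :=
  M.submatrix id (Fin.castAdd c)

/-- The last `c` columns of a matrix with `b + c` columns. -/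
def colsR {a b c : ℕ} (M : Matrix (Fin a) (Fin (b + c)) ℂ) : Matrix (Fin a) (Fin c) ℂ :=
  M.submatrix id (Fin.natAdd b)

theorem card_lt_of_lt_getD_insertionSort {n : ℕ} (f : Fin n → ℝ) {c : ℝ} (hc : 0 ≤ c) (j : ℕ)
    (h : c < (List.insertionSort (· ≥ ·) (List.ofFn f)).getD j 0) :
    j < (Finset.univ.filter fun i => c < f i).card := by
  set L := List.insertionSort (· ≥ ·) (List.ofFn f) with hL
  have hj : j < L.length := by
    by_contra hj
    rw [List.getD_eq_default _ _ (not_lt.mp hj)] at h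
    exact absurd h (not_lt.mpr hc)
  rw [List.getD_eq_getElem _ _ hj] at h
  have hcount : L.countP (fun x => decide (c < x)) =
      (Finset.univ.filter fun i => c < f i).card := by
    rw [(List.perm_insertionSort _ _).countP_eq, List.ofFn_eq_map, List.countP_map]
    have := List.Nodup.card_eq_countP (P := fun i => c < f i) (List.nodup_finRange n)
    rw [List.toFinset_finRange] at this
    exact this.symm
  rw [← hcount]
  have htake : (L.take (j + 1)).countP (fun x => decide (c < x)) = (L.take (j + 1)).length := by
    rw [List.countP_eq_length]
    intro a ha
    obtain ⟨i, hi, rfl⟩ := List.getElem_of_mem ha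
    have hi' : i < j + 1 := by
      rw [List.length_take] at hi
      omega
    rw [List.getElem_take]
    have hs : L.SortedGE := List.sortedGE_insertionSort
    have := hs.antitone_get (a := ⟨i, by omega⟩) (b := ⟨j, hj⟩) (by
      rw [Fin.mk_le_mk]; omega)
    simp only [List.get_eq_getElem] at this
    exact decide_eq_true (h.trans_le this)
  have := (List.take_sublist (j + 1) L).countP_le (p := fun x => decide (c < x))
  rw [htake, List.length_take] at this
  omega

/-- The squared Euclidean norm of a complex vector. -/
noncomputable def vecNormSq {n : ℕ} (x : Fin n → ℂ) : ℝ := ∑ i, ‖x i‖ ^ 2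

theorem vecNormSq_nonneg {n : ℕ} (x : Fin n → ℂ) : 0 ≤ vecNormSq x :=
  Finset.sum_nonneg fun _ _ => sq_nonneg _

theorem vecNormSq_pos {n : ℕ} {x : Fin n → ℂ} (hx : x ≠ 0) : 0 < vecNormSq x := by
  obtain ⟨i, hi⟩ := Function.ne_iff.mp hx
  exact Finset.sum_pos' (fun _ _ => sq_nonneg _)
    ⟨i, Finset.mem_univ i, pow_pos (norm_pos_iff.mpr hi) 2⟩

theorem ofReal_vecNormSq {n : ℕ} (x : Fin n → ℂ) : (vecNormSq x : ℂ) = star x ⬝ᵥ x := by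
  simp [vecNormSq, dotProduct, Complex.conj_mul']

theorem ofReal_vecNormSq_mulVec {m n : ℕ} (M : Matrix (Fin m) (Fin n) ℂ) (x : Fin n → ℂ) :
    (vecNormSq (M *ᵥ x) : ℂ) = star x ⬝ᵥ ((Mᴴ * M) *ᵥ x) := by
  rw [ofReal_vecNormSq, star_mulVec, dotProduct_mulVec, vecMul_vecMul, ← dotProduct_mulVec]

theorem vecNormSq_mulVec_of_isometry {m n : ℕ} {M : Matrix (Fin m) (Fin n) ℂ} (hM : Mᴴ * M = 1)
    (x : Fin n → ℂ) : vecNormSq (M *ᵥ x) = vecNormSq x := by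
  have h := ofReal_vecNormSq_mulVec M x
  rw [hM, one_mulVec, ← ofReal_vecNormSq] at h
  exact_mod_cast h

/-- Diagonalization of the quadratic form `x ↦ ‖M x‖²`. -/
theorem exists_unitary_vecNormSq_mulVec_eq {m n : ℕ} (M : Matrix (Fin m) (Fin n) ℂ) :
    ∃ W : Matrix (Fin n) (Fin n) ℂ, (∀ x, vecNormSq (W *ᵥ x) = vecNormSq x) ∧
      ∀ x, vecNormSq (M *ᵥ x) =
        ∑ i, (isHermitian_conjTranspose_mul_self M).eigenvalues i * ‖(W *ᵥ x) i‖ ^ 2 := by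
  set hM := isHermitian_conjTranspose_mul_self M
  set E : Matrix (Fin n) (Fin n) ℂ := hM.eigenvectorUnitary.1
  have hE : E * Eᴴ = 1 := Unitary.coe_mul_star_self hM.eigenvectorUnitary
  refine ⟨Eᴴ, fun x => vecNormSq_mulVec_of_isometry (by rwa [conjTranspose_conjTranspose]) x,
    fun x => ?_⟩
  have hs : Mᴴ * M = E * diagonal (RCLike.ofReal ∘ hM.eigenvalues) * Eᴴ := by
    have := hM.spectral_theorem
    rwa [Unitary.conjStarAlgAut_apply] at this
  have h := ofReal_vecNormSq_mulVec M x
  rw [hs, ← mulVec_mulVec, ← mulVec_mulVec, dotProduct_mulVec] at h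
  have h2 : star x ᵥ* E = star (Eᴴ *ᵥ x) := by rw [star_mulVec, conjTranspose_conjTranspose]
  rw [h2] at h
  have h3 : ((∑ i, hM.eigenvalues i * ‖(Eᴴ *ᵥ x) i‖ ^ 2 : ℝ) : ℂ) =
      star (Eᴴ *ᵥ x) ⬝ᵥ (diagonal (RCLike.ofReal ∘ hM.eigenvalues) *ᵥ (Eᴴ *ᵥ x)) := by
    simp only [dotProduct, mulVec_diagonal, Pi.star_apply, Complex.ofReal_sum, Complex.ofReal_mul,
      Complex.ofReal_pow, Function.comp_apply]
    refine Finset.sum_congr rfl fun i _ => ?_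
    rw [← Complex.conj_mul']
    simp only [Complex.coe_algebraMap, RCLike.star_def]
    change _ = _ * ((hM.eigenvalues i : ℂ) * _)
    ring
  rw [← h3] at h
  exact_mod_cast h

theorem sval_eq {m n : ℕ} (M : Matrix (Fin m) (Fin n) ℂ) (j : ℕ) :
    sval M j = (List.insertionSort (· ≥ ·) (List.ofFn fun i =>
      √((isHermitian_conjTranspose_mul_self M).eigenvalues i))).getD j 0 := by
  rw [sval, List.map_ofFn]; rfl

/-- The upper half of the Courant–Fischer min-max principle. -/
theorem sval_le_of_forall_mem {m n : ℕ} (M : Matrix (Fin m) (Fin n) ℂ)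
    (S : Submodule ℂ (Fin n → ℂ)) (j : ℕ) (hS : n ≤ j + Module.finrank ℂ S) {c : ℝ}
    (hc : 0 ≤ c) (h : ∀ x ∈ S, vecNormSq (M *ᵥ x) ≤ c ^ 2 * vecNormSq x) :
    sval M j ≤ c := by
  by_contra! hlt
  rw [sval_eq] at hlt
  have hcard := card_lt_of_lt_getD_insertionSort _ hc j hlt
  obtain ⟨W, hW, hM⟩ := exists_unitary_vecNormSq_mulVec_eq M
  set ev := (isHermitian_conjTranspose_mul_self M).eigenvalues
  have hsmall : Fintype.card {i // ¬ c < √(ev i)} < Module.finrank ℂ S := by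
    have := Finset.card_filter_add_card_filter_not (s := Finset.univ) (fun i => c < √(ev i))
    rw [Finset.card_univ, Fintype.card_fin] at this
    rw [Fintype.card_subtype]
    omega
  let φ : S →ₗ[ℂ] ({i // ¬ c < √(ev i)} → ℂ) :=
    LinearMap.funLeft ℂ ℂ Subtype.val ∘ₗ W.mulVecLin ∘ₗ S.subtype
  have hker : LinearMap.ker φ ≠ ⊥ := LinearMap.ker_ne_bot_of_finrank_lt (by
    rwa [Module.finrank_fintype_fun_eq_card])
  obtain ⟨⟨x, hxS⟩, hxφ, hx0⟩ := Submodule.exists_mem_ne_zero_of_ne_bot hker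
  have hx : x ≠ 0 := fun hx => hx0 (Subtype.ext hx)
  have hzero : ∀ i, ¬ c < √(ev i) → (W *ᵥ x) i = 0 := fun i hi =>
    congrFun (LinearMap.mem_ker.mp hxφ) ⟨i, hi⟩
  have hWx : W *ᵥ x ≠ 0 := fun h0 => by
    have := vecNormSq_pos hx
    rw [← hW, h0] at this
    simp [vecNormSq] at this
  obtain ⟨l, hl⟩ := Function.ne_iff.mp hWx
  have hle := h x hxS
  rw [hM, ← hW, vecNormSq, Finset.mul_sum] at hle
  refine absurd hle (not_le.mpr (Finset.sum_lt_sum (fun i _ => ?_) ⟨l, Finset.mem_univ l, ?_⟩))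
  · by_cases hi : c < √(ev i)
    · exact mul_le_mul_of_nonneg_right ((Real.lt_sqrt hc).mp hi).le (sq_nonneg _)
    · simp [hzero i hi]
  · have hcl : c < √(ev l) := by
      by_contra hcl
      exact hl (hzero l hcl)
    exact mul_lt_mul_of_pos_right ((Real.lt_sqrt hc).mp hcl) (pow_pos (norm_pos_iff.mpr hl) 2)

theorem sval_nonneg {m n : ℕ} (M : Matrix (Fin m) (Fin n) ℂ) (j : ℕ) : 0 ≤ sval M j := by
  rw [sval_eq]
  set L := List.insertionSort (· ≥ ·) (List.ofFn fun i =>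
      √((isHermitian_conjTranspose_mul_self M).eigenvalues i)) with hL
  by_cases hj : j < L.length
  · rw [List.getD_eq_getElem _ _ hj]
    have hmem := List.getElem_mem hj
    obtain ⟨i, hi⟩ := List.mem_ofFn.mp ((List.mem_insertionSort _).mp hmem)
    exact (Real.sqrt_nonneg _).trans_eq hi
  · rw [List.getD_eq_default _ _ (not_lt.mp hj)]

theorem sqrt_eigenvalues_le_sval_zero {m n : ℕ} (M : Matrix (Fin m) (Fin n) ℂ) (i : Fin n) :
    √((isHermitian_conjTranspose_mul_self M).eigenvalues i) ≤ sval M 0 := by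
  rw [sval_eq]
  set f : Fin n → ℝ := fun i => √((isHermitian_conjTranspose_mul_self M).eigenvalues i)
  set L := List.insertionSort (· ≥ ·) (List.ofFn f) with hL
  have hmem : f i ∈ L := by
    rw [hL, List.mem_insertionSort, List.mem_ofFn]
    exact ⟨i, rfl⟩
  obtain ⟨l, hl, hli⟩ := List.getElem_of_mem hmem
  have h0 : 0 < L.length := by omega
  have hs : L.SortedGE := List.sortedGE_insertionSort
  have := hs.antitone_get (a := ⟨0, h0⟩) (b := ⟨l, hl⟩) (Fin.mk_le_mk.mpr (Nat.zero_le _))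
  rw [List.getD_eq_getElem _ _ h0]
  change f i ≤ _
  rw [← hli]
  exact this

theorem vecNormSq_mulVec_le {m n : ℕ} (M : Matrix (Fin m) (Fin n) ℂ) (x : Fin n → ℂ) :
    vecNormSq (M *ᵥ x) ≤ sval M 0 ^ 2 * vecNormSq x := by
  obtain ⟨W, hW, hM⟩ := exists_unitary_vecNormSq_mulVec_eq M
  rw [hM, ← hW, vecNormSq, Finset.mul_sum]
  refine Finset.sum_le_sum fun i _ => mul_le_mul_of_nonneg_right ?_ (sq_nonneg _)
  rw [← Real.sqrt_le_left (sval_nonneg M 0)]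
  exact sqrt_eigenvalues_le_sval_zero M i

open scoped ComplexOrder in
theorem mul_rpinv_of_rank_eq {a b : ℕ} {M : Matrix (Fin a) (Fin b) ℂ} (hM : M.rank = a) :
    M * rpinv M = 1 := by
  have hr : (M * Mᴴ).rank = a := by rw [rank_self_mul_conjTranspose, hM]
  have hu : IsUnit (M * Mᴴ) := by
    rw [← mulVec_surjective_iff_isUnit]
    have htop : LinearMap.range (M * Mᴴ).mulVecLin = ⊤ :=
      Submodule.eq_top_of_finrank_eq (by rw [Module.finrank_fin_fun]; exact hr)
    exact LinearMap.range_eq_top.mp htop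
  rw [rpinv, ← Matrix.mul_assoc]
  exact mul_nonsing_inv _ ((isUnit_iff_isUnit_det _).mp hu)

theorem vecNormSq_append {a b : ℕ} (x : Fin (a + b) → ℂ) :
    vecNormSq x = vecNormSq (fun i => x (Fin.castAdd b i)) +
      vecNormSq (fun i => x (Fin.natAdd a i)) :=
  Fin.sum_univ_add _

theorem vecNormSq_smul {n : ℕ} (c : ℝ) (x : Fin n → ℂ) :
    vecNormSq ((c : ℂ) • x) = c ^ 2 * vecNormSq x := by
  simp [vecNormSq, mul_pow, Finset.mul_sum]

/-- The residual of the orthogonal projection onto the range of an isometry is minimal. -/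
theorem vecNormSq_residual_le {n r : ℕ} {W : Matrix (Fin n) (Fin r) ℂ} (hW : Wᴴ * W = 1)
    (v : Fin n → ℂ) (w : Fin r → ℂ) :
    vecNormSq ((1 - W * Wᴴ) *ᵥ v) ≤ vecNormSq (v - W *ᵥ w) := by
  have hkill : (1 - W * Wᴴ) * W = 0 := by
    rw [Matrix.sub_mul, Matrix.mul_assoc, hW, Matrix.one_mul, Matrix.mul_one, sub_self]
  have hv : (1 - W * Wᴴ) *ᵥ v = (1 - W * Wᴴ) *ᵥ (v - W *ᵥ w) := by
    rw [mulVec_sub, mulVec_mulVec, hkill, zero_mulVec, sub_zero]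
  rw [hv]
  set u := v - W *ᵥ w
  have hproj : (1 - W * Wᴴ)ᴴ * (1 - W * Wᴴ) = 1 - W * Wᴴ := by
    rw [conjTranspose_sub, conjTranspose_one, conjTranspose_mul, conjTranspose_conjTranspose,
      Matrix.mul_sub, Matrix.mul_one, ← Matrix.mul_assoc, hkill, Matrix.zero_mul, sub_zero]
  have h := ofReal_vecNormSq_mulVec (1 - W * Wᴴ) u
  have h' := ofReal_vecNormSq_mulVec Wᴴ u
  rw [conjTranspose_conjTranspose] at h'
  have h2 : vecNormSq ((1 - W * Wᴴ) *ᵥ u) = vecNormSq u - vecNormSq (Wᴴ *ᵥ u) := by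
    apply Complex.ofReal_injective
    rw [h, hproj, sub_mulVec, one_mulVec, dotProduct_sub, ← h', ← ofReal_vecNormSq,
      Complex.ofReal_sub]
  rw [h2]
  exact sub_le_self _ (vecNormSq_nonneg _)

theorem conjTranspose_diagRect_mul_self (σ : ℕ → ℝ) (a b : ℕ) :
    (diagRect σ 0 a b)ᴴ * diagRect σ 0 a b =
      diagonal fun i : Fin b => if (i : ℕ) < a then ((σ i ^ 2 : ℝ) : ℂ) else 0 := by
  ext i j
  rw [mul_apply, diagonal_apply]
  simp only [diagRect, conjTranspose_apply, of_apply, zero_add]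
  by_cases hi : (i : ℕ) < a
  · rw [Finset.sum_eq_single ⟨i, hi⟩]
    · by_cases hij : i = j
      · simp [hij, sq]
        simp [← hij, hi]
      · simp [hij, Fin.val_ne_of_ne hij]
    · intro l _ hl
      have : (l : ℕ) ≠ i := fun h => hl (Fin.ext h)
      simp [this]
    · simp
  · rw [Finset.sum_eq_zero]
    · simp [hi]
    · intro l _
      have : (l : ℕ) ≠ i := by omega
      simp [this]

theorem conj_diagonal_pow {n : ℕ} {V : Matrix (Fin n) (Fin n) ℂ} (hV : Vᴴ * V = 1)
    (hV' : V * Vᴴ = 1) (d : Fin n → ℂ) (p : ℕ) :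
    (V * diagonal d * Vᴴ) ^ p = V * diagonal (d ^ p) * Vᴴ := by
  induction p with
  | zero => simp [hV']
  | succ p ih =>
    have hd : diagonal (d ^ (p + 1)) = diagonal (d ^ p) * diagonal d := by
      rw [pow_succ, diagonal_mul_diagonal]
      rfl
    rw [pow_succ, ih, hd]
    calc _ = V * diagonal (d ^ p) * (Vᴴ * V) * diagonal d * Vᴴ := by simp only [Matrix.mul_assoc]
      _ = _ := by rw [hV]; simp only [Matrix.mul_assoc, Matrix.mul_one]

theorem conjTranspose_mul_mul_conjTranspose_pow_mul {m n : ℕ} (A : Matrix (Fin m) (Fin n) ℂ)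
    (q : ℕ) : Aᴴ * ((A * Aᴴ) ^ q * A) = (Aᴴ * A) ^ (q + 1) := by
  induction q with
  | zero => simp
  | succ q ih =>
    rw [pow_succ (Aᴴ * A), ← ih, pow_succ (A * Aᴴ)]
    simp only [Matrix.mul_assoc]

theorem conjTranspose_mulVec_colsL_mulVec {n₁ n₂ : ℕ}
    {V : Matrix (Fin (n₁ + n₂)) (Fin (n₁ + n₂)) ℂ} (hV : Vᴴ * V = 1) (x : Fin n₁ → ℂ) :
    Vᴴ *ᵥ (colsL V *ᵥ x) = Fin.append x 0 := by
  have hx : colsL V *ᵥ x = V *ᵥ Fin.append x 0 := by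
    ext i
    simp [mulVec, dotProduct, colsL, Fin.sum_univ_add]
  rw [hx, mulVec_mulVec, hV, one_mulVec]

/-- Distance from a vector `V_k x` to a multiple of the corresponding vector in the range of
`(V diag(d) V*) Ω Ω₁†`. -/
theorem vecNormSq_colsL_sub_smul_le {k n₂ r : ℕ}
    {V : Matrix (Fin (k + n₂)) (Fin (k + n₂)) ℂ} (hV : Vᴴ * V = 1) (hV' : V * Vᴴ = 1)
    {Ω : Matrix (Fin (k + n₂)) (Fin r) ℂ} (hΩ : ((colsL V)ᴴ * Ω).rank = k)
    (d : Fin (k + n₂) → ℂ) {s : ℝ} (hs : ∀ i, ‖d (Fin.natAdd k i)‖ ≤ s)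
    {x z : Fin k → ℂ} (hxz : ∀ i, d (Fin.castAdd n₂ i) * z i = x i) (c : ℝ) :
    vecNormSq (colsL V *ᵥ x -
        (c : ℂ) • ((V * diagonal d * Vᴴ * Ω * rpinv ((colsL V)ᴴ * Ω)) *ᵥ z)) ≤
      (1 - c) ^ 2 * vecNormSq x + c ^ 2 * (s ^ 2 *
        (sval ((colsR V)ᴴ * Ω * rpinv ((colsL V)ᴴ * Ω)) 0 ^ 2 * vecNormSq z)) := by
  set P := rpinv ((colsL V)ᴴ * Ω)
  set y := Vᴴ *ᵥ ((Ω * P) *ᵥ z)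
  have hyL : ∀ i, y (Fin.castAdd n₂ i) = z i := fun i => by
    have h : ((colsL V)ᴴ * (Ω * P)) *ᵥ z = z := by
      rw [← Matrix.mul_assoc, mul_rpinv_of_rank_eq hΩ, one_mulVec]
    rw [← mulVec_mulVec] at h
    exact congrFun h i
  have hyR : (fun i => y (Fin.natAdd k i)) = ((colsR V)ᴴ * Ω * P) *ᵥ z := by
    rw [Matrix.mul_assoc, ← mulVec_mulVec]
    rfl
  have hVu : Vᴴ *ᵥ ((V * diagonal d * Vᴴ * Ω * P) *ᵥ z) = diagonal d *ᵥ y := by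
    have hM : V * diagonal d * Vᴴ * Ω * P = V * (diagonal d * (Vᴴ * (Ω * P))) := by
      simp only [Matrix.mul_assoc]
    rw [hM, ← mulVec_mulVec, mulVec_mulVec _ Vᴴ V, hV, one_mulVec, ← mulVec_mulVec,
      ← mulVec_mulVec]
  have hVV : Vᴴᴴ * Vᴴ = 1 := by rwa [conjTranspose_conjTranspose]
  rw [← vecNormSq_mulVec_of_isometry hVV, mulVec_sub, mulVec_smul, hVu,
    conjTranspose_mulVec_colsL_mulVec hV, vecNormSq_append]
  refine add_le_add (le_of_eq ?_) ?_
  · rw [← vecNormSq_smul]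
    congr 1
    ext i
    simp only [Pi.sub_apply, Pi.smul_apply, smul_eq_mul, mulVec_diagonal, Fin.append_left, hyL,
      hxz]
    push_cast
    ring
  · have h1 : (fun i => (Fin.append x (0 : Fin n₂ → ℂ) - (c : ℂ) • diagonal d *ᵥ y)
        (Fin.natAdd k i)) = ((-c : ℝ) : ℂ) • fun i => d (Fin.natAdd k i) * y (Fin.natAdd k i) := by
      ext i
      simp [mulVec_diagonal]
    rw [h1, vecNormSq_smul, neg_sq]
    refine mul_le_mul_of_nonneg_left ?_ (sq_nonneg c)
    have h2 := vecNormSq_mulVec_le ((colsR V)ᴴ * Ω * P) z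
    rw [← hyR] at h2
    refine le_trans ?_ (mul_le_mul_of_nonneg_left h2 (sq_nonneg s))
    rw [vecNormSq, vecNormSq, Finset.mul_sum]
    refine Finset.sum_le_sum fun i _ => ?_
    rw [norm_mul, mul_pow]
    gcongr
    exact hs i

theorem sq_one_sub_add_sq_mul_sq (f : ℝ) :
    (1 - 1 / (1 + f ^ 2)) ^ 2 + (1 / (1 + f ^ 2)) ^ 2 * f ^ 2 = (f / √(1 + f ^ 2)) ^ 2 := by
  have h : 0 < 1 + f ^ 2 := by positivity
  rw [div_pow f, Real.sq_sqrt h.le]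
  field_simp
  ring

/-- Theorem 3.1 (right singular subspace): bounds for the canonical angles
`ν_1 ≤ … ≤ ν_k` between the column spaces of `V_k` and `V̂`. -/
theorem canonical_angles_right
    {k m₂ n₂ ρ : ℕ} (q : ℕ) (hk : 1 ≤ k)
    (A : Matrix (Fin (k + m₂)) (Fin (k + n₂)) ℂ)
    (U : Matrix (Fin (k + m₂)) (Fin (k + m₂)) ℂ)
    (V : Matrix (Fin (k + n₂)) (Fin (k + n₂)) ℂ)
    (σ : ℕ → ℝ)
    (hU : Uᴴ * U = 1) (hU' : U * Uᴴ = 1)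
    (hV : Vᴴ * V = 1) (hV' : V * Vᴴ = 1)
    (hσ0 : ∀ i, 0 ≤ σ i) (hσm : ∀ i j, i ≤ j → σ j ≤ σ i)
    (hA : A = U * diagRect σ 0 (k + m₂) (k + n₂) * Vᴴ)
    (hrank : 0 < σ (k - 1)) (hgap : σ k < σ (k - 1))
    (Ω : Matrix (Fin (k + n₂)) (Fin (k + ρ)) ℂ)
    (hΩ : ((colsL V)ᴴ * Ω).rank = k)
    (Q : Matrix (Fin (k + m₂)) (Fin (k + ρ)) ℂ)
    (R : Matrix (Fin (k + ρ)) (Fin (k + ρ)) ℂ)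
    (hQ : Qᴴ * Q = 1) (hR : R.BlockTriangular id)
    (hQR : (A * Aᴴ) ^ q * A * Ω = Q * R)
    (UB : Matrix (Fin (k + ρ)) (Fin (k + ρ)) ℂ)
    (Vh : Matrix (Fin (k + n₂)) (Fin (k + ρ)) ℂ)
    (σh : ℕ → ℝ)
    (hUB : UBᴴ * UB = 1) (hUB' : UB * UBᴴ = 1)
    (hVh : Vhᴴ * Vh = 1)
    (hσh0 : ∀ i, 0 ≤ σh i) (hσhm : ∀ i j, i ≤ j → σh j ≤ σh i)
    (hB : Qᴴ * A = UB * diagRect σh 0 (k + ρ) (k + ρ) * Vhᴴ)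
    :
    ∀ j : Fin k,
      sval ((1 - Vh * Vhᴴ) * colsL V) (k - 1 - (j : ℕ)) ≤
        (σ k / σ (j : ℕ)) ^ (2 * q + 2) * sval ((colsR V)ᴴ * Ω * rpinv ((colsL V)ᴴ * Ω)) 0 /
          Real.sqrt (1 + (σ k / σ (j : ℕ)) ^ (4 * q + 4) * (sval ((colsR V)ᴴ * Ω * rpinv ((colsL V)ᴴ * Ω)) 0) ^ 2) := by
  intro j
  set Z := (colsR V)ᴴ * Ω * rpinv ((colsL V)ᴴ * Ω) with hZ
  set t := sval Z 0 with ht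
  set f := (σ k / σ j) ^ (2 * q + 2) * t with hf
  have hσpos : ∀ i : Fin k, 0 < σ i := fun i =>
    hrank.trans_le (hσm _ _ (by omega))
  have hf0 : 0 ≤ f := mul_nonneg (pow_nonneg (div_nonneg (hσ0 _) (hσ0 _)) _) (sval_nonneg Z 0)
  have hf2 : (σ k / σ j) ^ (4 * q + 4) * t ^ 2 = f ^ 2 := by
    rw [hf]
    ring
  rw [hf2]
  set e : Fin (k + n₂) → ℂ := fun i =>
    if (i : ℕ) < k + m₂ then ((σ i ^ 2 : ℝ) : ℂ) else 0 with he
  have hAA : (Aᴴ * A) ^ (q + 1) = V * diagonal (e ^ (q + 1)) * Vᴴ := by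
    rw [← conj_diagonal_pow hV hV', he, ← conjTranspose_diagRect_mul_self, hA]
    congr 1
    simp only [conjTranspose_mul, conjTranspose_conjTranspose, Matrix.mul_assoc]
    rw [← Matrix.mul_assoc Uᴴ U, hU, Matrix.one_mul]
  have hrange : (Aᴴ * A) ^ (q + 1) * Ω =
      Vh * ((diagRect σh 0 (k + ρ) (k + ρ))ᴴ * UBᴴ * R) := by
    have hAQ : Aᴴ * Q = Vh * ((diagRect σh 0 (k + ρ) (k + ρ))ᴴ * UBᴴ) := by
      have := congrArg conjTranspose hB
      simpa only [conjTranspose_mul, conjTranspose_conjTranspose] using this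
    rw [← conjTranspose_mul_mul_conjTranspose_pow_mul, Matrix.mul_assoc, hQR, ← Matrix.mul_assoc,
      hAQ, Matrix.mul_assoc]
  let φ : (Fin (j + 1) → ℂ) →ₗ[ℂ] (Fin k → ℂ) :=
    Function.ExtendByZero.linearMap ℂ (Fin.castLE j.isLt)
  have hφ : Function.Injective φ := fun a b hab => by
    ext i
    have := congrFun hab (Fin.castLE j.isLt i)
    simpa [φ, (Fin.castLE_injective j.isLt).extend_apply] using this
  refine sval_le_of_forall_mem _ (LinearMap.range φ) _ ?_ (by positivity) ?_
  · rw [LinearMap.finrank_range_of_inj hφ, Module.finrank_fin_fun]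
    omega
  rintro x ⟨a, rfl⟩
  set x := φ a
  have hsupp : ∀ i : Fin k, j < i → x i = 0 := fun i hi => by
    refine Function.extend_apply' _ _ _ ?_
    rintro ⟨l, rfl⟩
    have : (l : ℕ) < j + 1 := l.isLt
    have : (j : ℕ) < l := hi
    omega
  set z : Fin k → ℂ := fun i => x i / ((σ i ^ (2 * q + 2) : ℝ) : ℂ) with hz
  have hxz : ∀ i, (e ^ (q + 1)) (Fin.castAdd n₂ i) * z i = x i := fun i => by
    have hlt : (i : ℕ) < k + m₂ := by omega
    have hne : ((σ i : ℝ) : ℂ) ≠ 0 := Complex.ofReal_ne_zero.mpr (hσpos i).ne'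
    simp only [he, hz, Pi.pow_apply, Fin.val_castAdd, if_pos hlt, Complex.ofReal_pow, ← pow_mul]
    rw [show 2 * (q + 1) = 2 * q + 2 by ring]
    field_simp
  have hs : ∀ i, ‖(e ^ (q + 1)) (Fin.natAdd k i)‖ ≤ σ k ^ (2 * q + 2) := fun i => by
    rw [Pi.pow_apply, norm_pow, show 2 * q + 2 = 2 * (q + 1) by ring, pow_mul]
    refine pow_le_pow_left₀ (norm_nonneg _) ?_ _
    simp only [he, Fin.val_natAdd]
    split_ifs
    · rw [Complex.norm_real, Real.norm_of_nonneg (sq_nonneg _)]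
      exact pow_le_pow_left₀ (hσ0 _) (hσm _ _ (by omega)) 2
    · simpa using sq_nonneg (σ k)
  have hzx : σ j ^ (2 * (2 * q + 2)) * vecNormSq z ≤ vecNormSq x := by
    rw [vecNormSq, vecNormSq, Finset.mul_sum]
    refine Finset.sum_le_sum fun i _ => ?_
    by_cases hi : j < i
    · simp [hz, hsupp i hi]
    · have hpos := pow_pos (hσpos i) (2 * q + 2)
      have hji : σ j ^ (2 * q + 2) ≤ σ i ^ (2 * q + 2) :=
        pow_le_pow_left₀ (hσ0 _) (hσm _ _ (not_lt.mp hi)) _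
      have hji' := pow_le_pow_left₀ (pow_nonneg (hσ0 _) _) hji 2
      simp only [hz]
      rw [norm_div, Complex.norm_real, Real.norm_of_nonneg hpos.le, div_pow, mul_comm 2, pow_mul,
        ← mul_div_assoc, div_le_iff₀ (pow_pos hpos 2), mul_comm]
      exact mul_le_mul_of_nonneg_left hji' (sq_nonneg _)
  have hkey := vecNormSq_colsL_sub_smul_le hV hV' hΩ (e ^ (q + 1)) hs hxz (1 / (1 + f ^ 2))
  rw [← hAA, hrange, Matrix.mul_assoc, ← mulVec_mulVec, ← mulVec_smul, ← hZ, ← ht] at hkey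
  rw [← mulVec_mulVec]
  refine (vecNormSq_residual_le hVh _ _).trans (hkey.trans ?_)
  rw [← sq_one_sub_add_sq_mul_sq, add_mul, mul_assoc (_ ^ 2) (f ^ 2)]
  refine add_le_add le_rfl (mul_le_mul_of_nonneg_left ?_ (sq_nonneg _))
  calc (σ k ^ (2 * q + 2)) ^ 2 * (t ^ 2 * vecNormSq z)
      = f ^ 2 * (σ j ^ (2 * (2 * q + 2)) * vecNormSq z) := by
        have hne := (hσpos j).ne'
        rw [hf, div_pow]
        field_simp
        ring
    _ ≤ f ^ 2 * vecNormSq x := mul_le_mul_of_nonneg_left hzx (sq_nonneg f)
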